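/- arXiv:2310.09775 — 5 statements merged into one kernel-verified Lean document; each statement's English description precedes it below -/
import Mathlib

section
/- Let a, b be natural numbers with a ≥ 1 and b ≥ 1, and let p be a polynomial with complex coefficients whose degree satisfies deg p + 2 ≤ a + b. Then the function x ↦ p(x)/((x−i)^a·(x+i)^b) (with x the real variable coerced to ℂ) is integrable on ℝ and ∫_ℝ p(x)/((x−i)^a·(x+i)^b) dx = (2πi/(a−1)!) · g^{(a−1)}(i), where g : ℂ → ℂ is g(z) = p(z)/(z+i)^b and g^{(a−1)} denotes its (a−1)-st iterated complex derivative. -/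
open MeasureTheory Complex

lemma aux_u (x : ℝ) : (x : ℂ) - I ≠ 0 := by
  intro h
  have := congrArg Complex.im h
  simp at this

lemma aux_v (x : ℝ) : (x : ℂ) + I ≠ 0 := by
  intro h
  have := congrArg Complex.im h
  simp at this

lemma aux_uv (x : ℝ) : ((x : ℂ) - I) * ((x : ℂ) + I) = ((1 + x ^ 2 : ℝ) : ℂ) := by
  push_cast
  linear_combination -I_sq

lemma aux_ind (N : ℕ) : ∀ (Q : Polynomial ℂ → Prop)
    (_ : ∀ p q, Q p → Q q → Q (p + q)) (_ : ∀ c p, Q p → Q (Polynomial.C c * p))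
    (_ : ∀ j k, j + k = N →
      Q ((Polynomial.X - Polynomial.C I) ^ j * (Polynomial.X + Polynomial.C I) ^ k))
    (p : Polynomial ℂ) (_ : p.natDegree ≤ N), Q p := by
  induction N with
  | zero =>
    intro Q _ hs hb p hp
    rw [Polynomial.eq_C_of_natDegree_le_zero hp]
    simpa using hs (p.coeff 0) _ (hb 0 0 rfl)
  | succ N ih =>
    intro Q ha hs hb p hp
    have key : ∀ q : Polynomial ℂ, q.natDegree ≤ N →
        Q ((Polynomial.X - Polynomial.C I) * q) ∧ Q ((Polynomial.X + Polynomial.C I) * q) := by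
      apply ih (fun q => Q ((Polynomial.X - Polynomial.C I) * q) ∧
        Q ((Polynomial.X + Polynomial.C I) * q))
      · rintro p q ⟨h1, h2⟩ ⟨h3, h4⟩
        rw [mul_add, mul_add]
        exact ⟨ha _ _ h1 h3, ha _ _ h2 h4⟩
      · rintro c p ⟨h1, h2⟩
        rw [mul_left_comm, mul_left_comm _ (Polynomial.C c)]
        exact ⟨hs _ _ h1, hs _ _ h2⟩
      · intro j k hjk
        constructor
        · have := hb (j+1) k (by omega)
          rwa [pow_succ', mul_assoc] at this
        · have := hb j (k+1) (by omega)
          rwa [pow_succ', mul_left_comm] at this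
    obtain ⟨h1, h2⟩ := key p.divX (by rw [Polynomial.natDegree_divX_eq_natDegree_tsub_one]; omega)
    obtain ⟨h3, h4⟩ := key (Polynomial.C (p.coeff 0)) (by simp)
    have e : p = Polynomial.C (1/2) * ((Polynomial.X - Polynomial.C I) * p.divX +
        (Polynomial.X + Polynomial.C I) * p.divX) +
        (Polynomial.C (1/(2*I)) * ((Polynomial.X + Polynomial.C I) * Polynomial.C (p.coeff 0)) +
        Polynomial.C (-1/(2*I)) * ((Polynomial.X - Polynomial.C I) * Polynomial.C (p.coeff 0))) := by
      conv_lhs => rw [← Polynomial.X_mul_divX_add p]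
      apply Polynomial.funext
      intro z
      simp only [Polynomial.eval_add, Polynomial.eval_mul, Polynomial.eval_X, Polynomial.eval_C,
        Polynomial.eval_sub]
      have := I_ne_zero
      field_simp
      ring
    rw [e]
    exact ha _ _ (hs _ _ (ha _ _ h1 h2)) (ha _ _ (hs _ _ h4) (hs _ _ h3))

lemma aux_zpow_eq (a b j k : ℕ) (h : j + k + 2 = a + b) (u v : ℂ) (hu : u ≠ 0) (hv : v ≠ 0) :
    u ^ j * v ^ k / (u ^ a * v ^ b) = (u / v) ^ ((j : ℤ) - a) / v ^ 2 := by
  have hk : (k : ℤ) = a + b - j - 2 := by omega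
  rw [zpow_sub₀ (div_ne_zero hu hv), zpow_natCast, zpow_natCast, div_pow, div_pow]
  have : v ^ k * v ^ j * v ^ 2 = v ^ a * v ^ b := by
    rw [← pow_add, ← pow_add, ← pow_add]; congr 1; omega
  field_simp
  linear_combination this

lemma aux_integrable (m : ℤ) :
    Integrable (fun x : ℝ => (((x : ℂ) - I) / ((x : ℂ) + I)) ^ m / ((x : ℂ) + I) ^ 2) := by
  refine integrable_inv_one_add_sq.mono' (Continuous.aestronglyMeasurable ?_)
    (Filter.Eventually.of_forall fun x => ?_)
  · refine Continuous.div (Continuous.zpow₀ (Continuous.div (by fun_prop) (by fun_prop) aux_v) m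
      fun x => Or.inl (div_ne_zero (aux_u x) (aux_v x))) (by fun_prop) fun x => pow_ne_zero _ (aux_v x)
  · have h1 : ‖(x : ℂ) - I‖ = ‖(x : ℂ) + I‖ := by
      rw [← Complex.norm_conj]; simp
    have h2 : ‖(x : ℂ) + I‖ ≠ 0 := norm_ne_zero_iff.2 (aux_v x)
    have h3 : ‖(x : ℂ) + I‖ ^ 2 = 1 + x ^ 2 := by
      have := congrArg norm (aux_uv x)
      rw [norm_mul, h1, Complex.norm_real, Real.norm_of_nonneg (by positivity)] at this
      rw [← this, sq]
    rw [norm_div, norm_zpow, norm_div, h1, div_self h2, one_zpow, norm_pow, h3, one_div]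

lemma aux_tendsto (l : Filter ℝ) (hl : l ≤ Bornology.cobounded ℝ) (m : ℤ) :
    Filter.Tendsto (fun x : ℝ => (((x : ℂ) - I) / ((x : ℂ) + I)) ^ m) l (nhds 1) := by
  have h0 : Filter.Tendsto (fun x : ℝ => ((x : ℂ) + I)) l (Bornology.cobounded ℂ) :=
    (tendsto_add_const_cobounded I).comp
      ((RCLike.tendsto_ofReal_cobounded_cobounded ℂ).mono_left hl)
  have h1 : Filter.Tendsto (fun x : ℝ => 1 - 2 * I * ((x : ℂ) + I)⁻¹) l (nhds (1 - 2 * I * 0)) :=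
    tendsto_const_nhds.sub (tendsto_const_nhds.mul (Filter.tendsto_inv₀_cobounded.comp h0))
  have h2 : Filter.Tendsto (fun x : ℝ => ((x : ℂ) - I) / ((x : ℂ) + I)) l (nhds 1) := by
    have e : (fun x : ℝ => ((x : ℂ) - I) / ((x : ℂ) + I)) =
        fun x : ℝ => 1 - 2 * I * ((x : ℂ) + I)⁻¹ := by
      funext x
      have := aux_v x
      field_simp
      ring
    rw [e]
    simpa using h1
  simpa using h2.zpow₀ m (Or.inl one_ne_zero)

lemma aux_integral (m : ℤ) :
    ∫ x : ℝ, (((x : ℂ) - I) / ((x : ℂ) + I)) ^ m / ((x : ℂ) + I) ^ 2 =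
      if m = -1 then (Real.pi : ℂ) else 0 := by
  split_ifs with hm
  · subst hm
    rw [← integral_univ_inv_one_add_sq, ← integral_complex_ofReal]
    congr 1
    funext x
    have h1 := aux_u x
    have h2 := aux_v x
    have h3 := aux_uv x
    rw [ofReal_inv, ← h3, zpow_neg_one]
    field_simp
  · have hm' : ((m : ℂ) + 1) ≠ 0 := by
      intro h
      apply hm
      have : ((m + 1 : ℤ) : ℂ) = 0 := by push_cast; exact h
      have := Int.cast_eq_zero.1 this
      omega
    have hd : ∀ x : ℝ, HasDerivAt
        (fun x : ℝ => (((x : ℂ) - I) / ((x : ℂ) + I)) ^ (m + 1) * (1 / (2 * I * (m + 1))))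
        ((((x : ℂ) - I) / ((x : ℂ) + I)) ^ m / ((x : ℂ) + I) ^ 2) x := by
      intro x
      have h1 := aux_u x
      have h2 := aux_v x
      have hw : HasDerivAt (fun z : ℂ => (z - I) / (z + I))
          ((1 * ((x : ℂ) + I) - ((x : ℂ) - I) * 1) / ((x : ℂ) + I) ^ 2) (x : ℂ) :=
        ((hasDerivAt_id _).sub_const I).div ((hasDerivAt_id _).add_const I) h2
      have hz := (hasDerivAt_zpow (m + 1) (((x : ℂ) - I) / ((x : ℂ) + I))
        (Or.inl (div_ne_zero h1 h2))).comp (x : ℂ) hw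
      have := (hz.mul_const (1 / (2 * I * (m + 1)))).comp_ofReal
      refine this.congr_deriv ?_
      rw [add_sub_cancel_right]
      push_cast
      have := I_ne_zero
      field_simp
      ring
    rw [integral_of_hasDerivAt_of_tendsto hd (aux_integrable m)
      ((aux_tendsto _ IsOrderBornology.atBot_le_cobounded (m + 1)).mul_const _)
      ((aux_tendsto _ IsOrderBornology.atTop_le_cobounded (m + 1)).mul_const _), sub_self]

lemma aux_poly_iter (q : Polynomial ℂ) (n : ℕ) :
    iteratedDeriv n (fun z => q.eval z) = fun z => (Polynomial.derivative^[n] q).eval z := by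
  induction n with
  | zero => simp
  | succ n ih =>
    rw [iteratedDeriv_succ, ih, Function.iterate_succ_apply']
    funext z
    exact Polynomial.deriv _

lemma aux_contDiff (q : Polynomial ℂ) (b : ℕ) (n : WithTop ℕ∞) :
    ContDiffAt ℂ n (fun z : ℂ => q.eval z / (z + I) ^ b) I := by
  refine ContDiffAt.div (by simpa using (Polynomial.contDiff_aeval q n).contDiffAt (x := I)) (by fun_prop) ?_
  apply pow_ne_zero
  simpa [← two_mul] using I_ne_zero

lemma aux_deriv (n b j k : ℕ) (h : j + k + 1 = n + b) :
    iteratedDeriv n (fun z : ℂ => ((Polynomial.X - Polynomial.C I) ^ j *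
      (Polynomial.X + Polynomial.C I) ^ k : Polynomial ℂ).eval z / (z + I) ^ b) I =
      if j = n then (n.factorial : ℂ) / (2 * I) else 0 := by
  have h2I : (I + I : ℂ) ≠ 0 := by simpa [← two_mul] using I_ne_zero
  by_cases hj : n ≤ j
  · have e : (fun z : ℂ => ((Polynomial.X - Polynomial.C I) ^ j *
      (Polynomial.X + Polynomial.C I) ^ k : Polynomial ℂ).eval z / (z + I) ^ b) =
      (fun z : ℂ => (z - I) ^ j) * (fun z : ℂ => ((Polynomial.X + Polynomial.C I) ^ k :
        Polynomial ℂ).eval z / (z + I) ^ b) := by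
      funext z
      simp [mul_div_assoc]
    have hp : ∀ i, iteratedDeriv i (fun z : ℂ => (z - I) ^ j) I =
        if i = j then (j.factorial : ℂ) else 0 := by
      intro i
      rw [iteratedDeriv_comp_sub_const (f := fun z : ℂ => z ^ j)]
      simp only [sub_self]
      rw [iteratedDeriv_fun_pow_zero]
      split_ifs <;> simp
    rw [e, iteratedDeriv_mul (by fun_prop) (aux_contDiff _ _ _)]
    simp only [hp]
    rw [Finset.sum_range_succ, Finset.sum_eq_zero]
    · by_cases hjn : j = n
      · subst hjn
        obtain rfl : b = k + 1 := by omega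
        simp only [Nat.choose_self, if_true, Nat.sub_self, iteratedDeriv_zero]
        simp [pow_succ]
        field_simp
        ring
      · simp [hjn, Ne.symm hjn]
    · intro i hi
      rw [if_neg (by have := Finset.mem_range.1 hi; omega)]
      simp
  · rw [if_neg (by omega)]
    obtain ⟨d, rfl⟩ : ∃ d, k = b + d := ⟨k - b, by omega⟩
    have e : (fun z : ℂ => ((Polynomial.X - Polynomial.C I) ^ j *
      (Polynomial.X + Polynomial.C I) ^ (b + d) : Polynomial ℂ).eval z / (z + I) ^ b) =ᶠ[nhds I]
      (fun z : ℂ => ((Polynomial.X - Polynomial.C I) ^ j *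
      (Polynomial.X + Polynomial.C I) ^ d : Polynomial ℂ).eval z) := by
      have : ∀ᶠ z : ℂ in nhds I, z + I ≠ 0 :=
        (continuous_id.add continuous_const).continuousAt.eventually_ne h2I
      filter_upwards [this] with z hz
      simp [pow_add]
      field_simp
    rw [e.iteratedDeriv_eq, aux_poly_iter, Polynomial.iterate_derivative_eq_zero]
    · exact Polynomial.eval_zero
    refine lt_of_le_of_lt Polynomial.natDegree_mul_le ?_
    have h1 := Polynomial.natDegree_pow_le_of_le j (Polynomial.natDegree_X_sub_C_le I)
    have h2 := Polynomial.natDegree_pow_le_of_le d (Polynomial.natDegree_X_add_C I).le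
    omega

theorem stmt0 (a b : ℕ) (ha : 1 ≤ a) (hb : 1 ≤ b) (p : Polynomial ℂ)
    (hdeg : p.natDegree + 2 ≤ a + b) :
    Integrable (fun x : ℝ => p.eval (x : ℂ) / (((x : ℂ) - I) ^ a * ((x : ℂ) + I) ^ b)) ∧
    ∫ x : ℝ, p.eval (x : ℂ) / (((x : ℂ) - I) ^ a * ((x : ℂ) + I) ^ b) =
      (2 * (Real.pi : ℂ) * I / (Nat.factorial (a - 1) : ℂ)) *
        iteratedDeriv (a - 1) (fun z : ℂ => p.eval z / (z + I) ^ b) I := by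
  refine aux_ind (a + b - 2) (fun p => Integrable (fun x : ℝ => p.eval (x : ℂ) / (((x : ℂ) - I) ^ a * ((x : ℂ) + I) ^ b)) ∧
    ∫ x : ℝ, p.eval (x : ℂ) / (((x : ℂ) - I) ^ a * ((x : ℂ) + I) ^ b) =
      (2 * (Real.pi : ℂ) * I / (Nat.factorial (a - 1) : ℂ)) *
        iteratedDeriv (a - 1) (fun z : ℂ => p.eval z / (z + I) ^ b) I) ?_ ?_ ?_ p (by omega)
  · rintro p q ⟨h1, h2⟩ ⟨h3, h4⟩
    simp only [Polynomial.eval_add, add_div]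
    refine ⟨h1.add h3, ?_⟩
    rw [integral_add h1 h3, h2, h4, ← mul_add,
      ← iteratedDeriv_add (aux_contDiff _ _ _) (aux_contDiff _ _ _)]
    rfl
  · rintro c p ⟨h1, h2⟩
    simp only [Polynomial.eval_mul, Polynomial.eval_C, mul_div_assoc]
    refine ⟨h1.const_mul c, ?_⟩
    rw [integral_const_mul, h2, iteratedDeriv_const_mul_field]
    ring
  · intro j k hjk
    have e : (fun x : ℝ => ((Polynomial.X - Polynomial.C I) ^ j *
      (Polynomial.X + Polynomial.C I) ^ k : Polynomial ℂ).eval (x : ℂ) /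
        (((x : ℂ) - I) ^ a * ((x : ℂ) + I) ^ b)) =
        fun x : ℝ => (((x : ℂ) - I) / ((x : ℂ) + I)) ^ ((j : ℤ) - a) / ((x : ℂ) + I) ^ 2 := by
      funext x
      rw [← aux_zpow_eq a b j k (by omega) _ _ (aux_u x) (aux_v x)]
      simp
    rw [e]
    refine ⟨aux_integrable _, ?_⟩
    rw [aux_integral, aux_deriv _ _ _ _ (by omega)]
    by_cases hj : j = a - 1
    · rw [if_pos (by omega), if_pos hj]
      have := I_ne_zero
      have : ((a - 1).factorial : ℂ) ≠ 0 := by exact_mod_cast Nat.factorial_ne_zero _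
      field_simp
    · rw [if_neg (by omega), if_neg hj, mul_zero]
end

section
/- Let a, b, k be natural numbers with a ≥ 1, b ≥ 1 and k ≤ a + b − 2. Then ∫_ℝ x^k/((x−i)^a·(x+i)^b) dx = 2πi·(−1)^{a−1}·i^k·(2i)^{1−a−b}·∑_{j=0}^{a−1} C(k,j)·(−2)^j·C(a+b−2−j, a−1−j), where (2i)^{1−a−b} denotes the integer power of 2i with (possibly negative) exponent 1−a−b. -/
open MeasureTheory Complex

lemma aux_norm (x : ℝ) (e : ℂ) (he : e = I ∨ e = -I) : ‖(x:ℂ) + e‖ = Real.sqrt (1 + x^2) := by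
  rcases he with rfl | rfl <;>
  · rw [Complex.norm_eq_sqrt_sq_add_sq]; congr 1; simp; ring

lemma aux_ne (x : ℝ) (e : ℂ) (he : e = I ∨ e = -I) : (x:ℂ) + e ≠ 0 := by
  rw [← norm_ne_zero_iff, aux_norm x e he]; positivity

lemma aux_nem (x : ℝ) : (x:ℂ) - I ≠ 0 := by
  simpa [sub_eq_add_neg] using aux_ne x (-I) (Or.inr rfl)

lemma aux_nep (x : ℝ) : (x:ℂ) + I ≠ 0 := aux_ne x I (Or.inl rfl)

lemma aux_int (m n : ℤ) (h : m + n ≤ -2) :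
    Integrable (fun x : ℝ => ((x:ℂ) - I)^m * ((x:ℂ) + I)^n) := by
  refine Integrable.mono' integrable_inv_one_add_sq ?_ ?_
  · apply Continuous.aestronglyMeasurable
    refine Continuous.mul ?_ ?_
    · exact Continuous.zpow₀ (by fun_prop) _ (fun x => Or.inl (aux_nem x))
    · exact Continuous.zpow₀ (by fun_prop) _ (fun x => Or.inl (aux_nep x))
  · refine Filter.Eventually.of_forall fun x => ?_
    have h1 := aux_norm x I (Or.inl rfl)
    have h2 := aux_norm x (-I) (Or.inr rfl)
    rw [← sub_eq_add_neg] at h2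
    have hp : 0 < Real.sqrt (1 + x^2) := by positivity
    have h3 : 1 ≤ Real.sqrt (1 + x^2) := by
      rw [Real.one_le_sqrt]; nlinarith [sq_nonneg x]
    rw [norm_mul, norm_zpow, norm_zpow, h1, h2, ← zpow_add₀ hp.ne']
    calc _ ≤ Real.sqrt (1 + x^2) ^ (-2:ℤ) := zpow_le_zpow_right₀ h3 h
      _ = (1 + x^2)⁻¹ := by
        rw [zpow_neg]; congr 1
        exact Real.sq_sqrt (by positivity)

lemma aux_zero (e : ℂ) (he : e = I ∨ e = -I) (n : ℕ)
    (hi : Integrable (fun x : ℝ => ((x:ℂ) + e)^(-(n+2:ℤ)))) :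
    ∫ x : ℝ, ((x:ℂ) + e)^(-(n+2:ℤ)) = 0 := by
  have hn : (-(n+1:ℤ):ℂ) ≠ 0 := by
    have : ((n:ℂ)+1) ≠ 0 := by exact_mod_cast Nat.succ_ne_zero n
    simpa [neg_add] using neg_ne_zero.mpr this
  have hd : ∀ x : ℝ, HasDerivAt (fun x : ℝ => (-(n+1:ℤ):ℂ)⁻¹ * ((x:ℂ) + e)^(-(n+1:ℤ)))
      (((x:ℂ) + e)^(-(n+2:ℤ))) x := by
    intro x
    have h1 : HasDerivAt (fun x : ℝ => (x:ℂ) + e) 1 x :=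
      (Complex.ofRealCLM.hasDerivAt (x := x)).add_const e
    have h2 := (hasDerivAt_zpow (-(n+1:ℤ)) ((x:ℂ)+e) (Or.inl (aux_ne x e he))).comp x h1
    have h3 := h2.const_mul ((-(n+1:ℤ):ℂ)⁻¹)
    refine h3.congr_deriv ?_
    have : (-(n+1:ℤ) - 1 : ℤ) = -(n+2:ℤ) := by ring
    rw [this]
    push_cast at hn ⊢
    field_simp
  have hnorm : ∀ l : Filter ℝ, Filter.Tendsto (fun x : ℝ => ‖x‖) l Filter.atTop →
      Filter.Tendsto (fun x : ℝ => (-(n+1:ℤ):ℂ)⁻¹ * ((x:ℂ) + e)^(-(n+1:ℤ))) l (nhds 0) := by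
    intro l hl
    rw [← mul_zero ((-(n+1:ℤ):ℂ)⁻¹)]
    refine Filter.Tendsto.const_mul _ ?_
    rw [tendsto_zero_iff_norm_tendsto_zero]
    have hl' : Filter.Tendsto (fun x : ℝ => ‖(x:ℂ) + e‖) l Filter.atTop := by
      refine Filter.tendsto_atTop_mono (fun x => ?_) hl
      rw [aux_norm x e he, Real.norm_eq_abs]
      exact Real.abs_le_sqrt (by linarith)
    have := (tendsto_pow_neg_atTop (𝕜 := ℝ) (Nat.succ_ne_zero n)).comp hl'
    refine this.congr fun x => ?_
    simp [norm_zpow]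
  have := integral_of_hasDerivAt_of_tendsto hd hi
    (hnorm _ (by simpa using Filter.tendsto_abs_atBot_atTop)) (hnorm _ (by simpa using Filter.tendsto_abs_atTop_atTop))
  simpa using this

/-- the integral -/
noncomputable def auxJ (m n : ℤ) : ℂ := ∫ x : ℝ, ((x:ℂ) - I)^m * ((x:ℂ) + I)^n

lemma auxJ_zero_left (n : ℕ) : auxJ 0 (-(n+2:ℤ)) = 0 := by
  have h := aux_int 0 (-(n+2:ℤ)) (by omega)
  have := aux_zero I (Or.inl rfl) n (by simpa using h)
  simpa [auxJ] using this

lemma auxJ_zero_right (n : ℕ) : auxJ (-(n+2:ℤ)) 0 = 0 := by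
  have h := aux_int (-(n+2:ℤ)) 0 (by omega)
  have := aux_zero (-I) (Or.inr rfl) n (by simpa [← sub_eq_add_neg] using h)
  simpa [auxJ, ← sub_eq_add_neg] using this

lemma auxJ_rec (m n : ℤ) (h : m + n ≤ -3) :
    2 * I * auxJ m n = auxJ m (n+1) - auxJ (m+1) n := by
  unfold auxJ
  rw [← integral_sub (aux_int _ _ (by omega)) (aux_int _ _ (by omega)), ← integral_const_mul]
  congr 1; ext x
  rw [zpow_add_one₀ (aux_nem x), zpow_add_one₀ (aux_nep x)]
  ring

lemma auxJ_pos (p : ℕ) : ∀ n : ℕ, auxJ p (-(p + n + 2:ℤ)) = 0 := by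
  induction p with
  | zero => intro n; simpa using auxJ_zero_left n
  | succ p ih =>
    intro n
    have h := auxJ_rec p (-((p+1:ℕ) + n + 2:ℤ)) (by push_cast; omega)
    have h1 := ih n
    have h2 := ih (n+1)
    have e1 : (-((p+1:ℕ) + n + 2:ℤ)) + 1 = -(p + n + 2:ℤ) := by push_cast; ring
    have e2 : (-((p+1:ℕ) + n + 2:ℤ)) = -(p + (n+1:ℕ) + 2:ℤ) := by push_cast; ring
    rw [e1, e2, h1, h2] at h
    rw [e2]
    push_cast at h ⊢
    simpa using h.symm

lemma auxJ_one : auxJ (-1) (-1) = Real.pi := by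
  unfold auxJ
  rw [← integral_univ_inv_one_add_sq, ← integral_complex_ofReal]
  congr 1; ext x
  rw [zpow_neg_one, zpow_neg_one, ← mul_inv]
  push_cast
  congr 1
  ring_nf; simp; ring

lemma auxJ_main (s : ℕ) : ∀ m n : ℕ, m + n = s → auxJ (-(m+1:ℤ)) (-(n+1:ℤ)) =
    2 * Real.pi * I * (-1)^m * ((2 * I)^(m+n+1))⁻¹ * ((m+n).choose m : ℂ) := by
  have hI : (2 * I) ≠ 0 := by simp
  induction s with
  | zero =>
    intro m n h
    obtain ⟨rfl, rfl⟩ : m = 0 ∧ n = 0 := by omega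
    simp [auxJ_one]
    field_simp
    simp
  | succ s ih =>
    intro m n h
    have hr := auxJ_rec (-(m+1:ℤ)) (-(n+1:ℤ)) (by omega)
    have e1 : (-(n+1:ℤ)) + 1 = -n := by ring
    have e2 : (-(m+1:ℤ)) + 1 = -m := by ring
    rw [e1, e2] at hr
    apply mul_left_cancel₀ hI
    rw [hr]
    rcases m with _ | m <;> rcases n with _ | n
    · omega
    · have h1 := ih 0 n (by omega)
      have h2 := auxJ_zero_left n
      have e : (-((n+1:ℕ)+1:ℤ)) = -(n+2:ℤ) := by push_cast; ring
      rw [e]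
      push_cast at h1 ⊢
      simp only [neg_zero]
      rw [h2, h1]
      simp
      field_simp
      ring
    · have h1 := ih m 0 (by omega)
      have h2 := auxJ_zero_right m
      have e : (-((m+1:ℕ)+1:ℤ)) = -(m+2:ℤ) := by push_cast; ring
      rw [e]
      push_cast at h1 ⊢
      simp only [neg_zero]
      rw [h2]
      simp only [zero_add, neg_add_rev] at h1 ⊢
      rw [h1]
      simp
      field_simp
      ring
    · have h1 := ih m (n+1) (by omega)
      have h2 := ih (m+1) n (by omega)
      have hc : (m+1+(n+1)).choose (m+1) = (m+(n+1)).choose m + (m+1+n).choose (m+1) := by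
        rw [show m+1+(n+1) = (m+(n+1))+1 by ring, Nat.choose_succ_succ,
          show m+1+n = m+(n+1) by ring]
      rw [hc]
      push_cast at h1 h2 ⊢
      rw [h1, h2]
      rw [show m+1+(n+1)+1 = (m+n+2)+1 by ring, show m+(n+1)+1 = m+n+2 by ring,
        show m+1+n+1 = m+n+2 by ring, pow_succ (2*I) (m+n+2), pow_succ (-1:ℂ) m]
      field_simp
      ring

theorem stmt1 (a b k : ℕ) (ha : 1 ≤ a) (hb : 1 ≤ b) (hk : k ≤ a + b - 2) :
    ∫ x : ℝ, (x : ℂ) ^ k / (((x : ℂ) - I) ^ a * ((x : ℂ) + I) ^ b) =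
      2 * (Real.pi : ℂ) * I * (-1) ^ (a - 1) * I ^ k * (2 * I) ^ ((1 : ℤ) - (a : ℤ) - (b : ℤ)) *
        ∑ j ∈ Finset.range a,
          (k.choose j : ℂ) * (-2) ^ j * ((a + b - 2 - j).choose (a - 1 - j) : ℂ) := by
  have hI : (2 * I) ≠ 0 := by simp
  have h1 : ∀ x : ℝ, (x : ℂ) ^ k / (((x : ℂ) - I) ^ a * ((x : ℂ) + I) ^ b) =
      ∑ j ∈ Finset.range (k+1), (I^(k-j) * (k.choose j : ℂ)) *
        (((x:ℂ) - I)^((j:ℤ) - a) * ((x:ℂ) + I)^(-(b:ℤ))) := by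
    intro x
    have hx : (x:ℂ)^k = (((x:ℂ) - I) + I)^k := by simp
    rw [hx, add_pow, Finset.sum_div]
    refine Finset.sum_congr rfl fun j _ => ?_
    rw [zpow_sub₀ (aux_nem x), zpow_neg, zpow_natCast, zpow_natCast, zpow_natCast]
    have := aux_nem x
    have := aux_nep x
    field_simp
  have h2 : ∫ x : ℝ, (x : ℂ) ^ k / (((x : ℂ) - I) ^ a * ((x : ℂ) + I) ^ b) =
      ∑ j ∈ Finset.range (k+1), (I^(k-j) * (k.choose j : ℂ)) * auxJ ((j:ℤ) - a) (-(b:ℤ)) := by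
    simp_rw [h1]
    rw [integral_finsetSum]
    · refine Finset.sum_congr rfl fun j _ => ?_
      rw [integral_const_mul]; rfl
    · intro j hj
      rw [Finset.mem_range] at hj
      exact (aux_int _ _ (by omega)).const_mul _
  rw [h2]
  have h3 : ∑ j ∈ Finset.range (k+1), (I^(k-j) * (k.choose j : ℂ)) * auxJ ((j:ℤ) - a) (-(b:ℤ)) =
      ∑ j ∈ Finset.range (k+1+a), (I^(k-j) * (k.choose j : ℂ)) * auxJ ((j:ℤ) - a) (-(b:ℤ)) := by
    refine Finset.sum_subset (by intro j; simp only [Finset.mem_range]; omega) ?_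
    intro j _ hj
    rw [Finset.mem_range] at hj
    rw [Nat.choose_eq_zero_of_lt (by omega)]; simp
  have h4 : ∑ j ∈ Finset.range a, (I^(k-j) * (k.choose j : ℂ)) * auxJ ((j:ℤ) - a) (-(b:ℤ)) =
      ∑ j ∈ Finset.range (k+1+a), (I^(k-j) * (k.choose j : ℂ)) * auxJ ((j:ℤ) - a) (-(b:ℤ)) := by
    refine Finset.sum_subset (by intro j; simp only [Finset.mem_range]; omega) ?_
    intro j _ hj
    rw [Finset.mem_range] at hj
    by_cases hjk : k < j
    · rw [Nat.choose_eq_zero_of_lt hjk]; simp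
    · have := auxJ_pos (j - a) (a + b - 2 - j)
      rw [show (j:ℤ) - a = ((j - a : ℕ) : ℤ) by omega,
        show -(b:ℤ) = -(((j - a : ℕ) : ℤ) + ((a + b - 2 - j : ℕ) : ℤ) + 2) by omega, this, mul_zero]
  rw [h3, ← h4, Finset.mul_sum]
  refine Finset.sum_congr rfl fun j hj => ?_
  rw [Finset.mem_range] at hj
  by_cases hjk : k < j
  · rw [Nat.choose_eq_zero_of_lt hjk]; simp
  · obtain ⟨m, rfl⟩ : ∃ m, a = j + m + 1 := ⟨a - j - 1, by omega⟩
    obtain ⟨n, rfl⟩ : ∃ n, b = n + 1 := ⟨b - 1, by omega⟩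
    obtain ⟨l, rfl⟩ : ∃ l, k = j + l := ⟨k - j, by omega⟩
    have hm := auxJ_main _ m n rfl
    rw [show ((j:ℤ) - ((j + m + 1 : ℕ):ℤ)) = -(m+1:ℤ) by push_cast; ring,
      show (-((n+1:ℕ):ℤ)) = -(n+1:ℤ) by push_cast; ring, hm,
      show (1:ℤ) - ((j + m + 1 : ℕ):ℤ) - ((n+1:ℕ):ℤ) = -((j + (m + n + 1) : ℕ):ℤ) by push_cast; ring,
      zpow_neg, zpow_natCast, show j + m + 1 + (n+1) - 2 - j = m + n by omega,
      show j + m + 1 - 1 - j = m by omega, show j + m + 1 - 1 = j + m by omega,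
      show j + l - j = l by omega, pow_add (2*I) j, mul_pow 2 I j, pow_add I j l,
      pow_add (-1:ℂ) j m, show (-2:ℂ)^j = (-1)^j * 2^j by rw [← mul_pow]; norm_num]
    have h5 : ((-1:ℂ)^j) * (-1)^j = 1 := by rw [← mul_pow]; simp
    have h6 : (I^j) ≠ 0 := pow_ne_zero _ I_ne_zero
    have h7 : ((2:ℂ)^j) ≠ 0 := pow_ne_zero _ two_ne_zero
    have h8 : ((2*I)^(m+n+1)) ≠ 0 := pow_ne_zero _ hI
    generalize (2*I)^(m+n+1) = D at *
    generalize (-1:ℂ)^j = s at *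
    generalize I^j = u at *
    generalize (2:ℂ)^j = t at *
    field_simp
    rw [show s^2 = 1 by rw [sq, h5]]
    try ring
end

section
/- Let ξ₀ be a real number, let r be a real number with 0 < r < 1, and let a, b be complex numbers. Then (1/(2πi)) · ∮_{z ∈ C(i,r)} ( (a + z·b)/(1 + z²)² ) / (ξ₀ − z) dz = −((i·ξ₀ + 2)·a + i·b)/(4·(ξ₀ − i)²). -/
open Complex

theorem stmt13 (ξ₀ : ℝ) (r : ℝ) (hr0 : 0 < r) (hr1 : r < 1) (a b : ℂ) :
    (1 / (2 * (Real.pi : ℂ) * I)) *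
        (∮ z in C(I, r), ((a + z * b) / (1 + z ^ 2) ^ 2) / ((ξ₀ : ℂ) - z)) =
      -((I * (ξ₀ : ℂ) + 2) * a + I * b) / (4 * ((ξ₀ : ℂ) - I) ^ 2) := by
  have hD : ∀ z : ℂ, 0 < z.im → (z + I) ^ 2 * ((ξ₀ : ℂ) - z) ≠ 0 := by
    intro z hz
    refine mul_ne_zero (pow_ne_zero _ ?_) ?_
    · intro h
      have := congrArg Complex.im h
      simp at this
      linarith
    · intro h
      have := congrArg Complex.im h
      simp at this
      linarith
  have hd : ∀ z : ℂ, 0 < z.im →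
      HasDerivAt (fun z : ℂ => (a + z * b) / ((z + I) ^ 2 * ((ξ₀ : ℂ) - z)))
        ((b * ((z + I) ^ 2 * ((ξ₀ : ℂ) - z)) -
          (a + z * b) * (2 * (z + I) * ((ξ₀ : ℂ) - z) - (z + I) ^ 2)) /
          ((z + I) ^ 2 * ((ξ₀ : ℂ) - z)) ^ 2) z := by
    intro z hz
    have h1 : HasDerivAt (fun z : ℂ => a + z * b) b z := by
      simpa using ((hasDerivAt_id z).mul_const b).const_add a
    have h2 : HasDerivAt (fun z : ℂ => (z + I) ^ 2) (2 * (z + I)) z := by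
      simpa using ((hasDerivAt_id z).add_const I).fun_pow 2
    have h3 : HasDerivAt (fun z : ℂ => (ξ₀ : ℂ) - z) (-1) z := by
      simpa using (hasDerivAt_id z).const_sub (ξ₀ : ℂ)
    have h4 := h1.fun_div (h2.fun_mul h3) (hD z hz)
    refine h4.congr_deriv ?_
    congr 1
    ring
  have hU : IsOpen {z : ℂ | 0 < z.im} := isOpen_lt continuous_const Complex.continuous_im
  have hsub : Metric.closedBall I r ⊆ {z : ℂ | 0 < z.im} := by
    intro z hz
    rw [mem_closedBall_iff_norm] at hz
    have := (Complex.abs_im_le_norm (z - I)).trans hz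
    simp at this
    have := (abs_le.mp this).1
    simp only [Set.mem_ofPred_eq]
    linarith
  have key := two_pi_I_inv_smul_circleIntegral_sub_sq_inv_smul_of_differentiable hU hsub
    (fun z hz => (hd z hz).differentiableAt.differentiableWithinAt) (Metric.mem_ball_self hr0)
  rw [(hd I (by simp)).deriv] at key
  have hfun : (fun z : ℂ => ((a + z * b) / (1 + z ^ 2) ^ 2) / ((ξ₀ : ℂ) - z)) =
      fun z : ℂ => ((z - I) ^ 2)⁻¹ • ((a + z * b) / ((z + I) ^ 2 * ((ξ₀ : ℂ) - z))) := by
    funext z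
    have : (1 + z ^ 2) = (z - I) * (z + I) := by
      linear_combination I_sq
    rw [this, smul_eq_mul, mul_pow]
    simp only [div_eq_mul_inv, mul_inv]
    ring
  rw [hfun, one_div, ← smul_eq_mul, key]
  have hne : (ξ₀ : ℂ) - I ≠ 0 := right_ne_zero_of_mul (hD I (by simp))
  have e : (I + I) ^ 2 * ((ξ₀ : ℂ) - I) = -4 * ((ξ₀ : ℂ) - I) := by
    linear_combination 4 * ((ξ₀ : ℂ) - I) * I_sq
  have e2 : (I + I) ^ 2 = -4 := by linear_combination 4 * I_sq
  rw [e, e2, div_eq_div_iff (pow_ne_zero _ (mul_ne_zero (by norm_num) hne))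
    (mul_ne_zero (by norm_num) (pow_ne_zero _ hne))]
  have e3 : b * (-4 * ((ξ₀ : ℂ) - I)) - (a + I * b) * (2 * (I + I) * ((ξ₀ : ℂ) - I) - -4)
      = -4 * ((I * (ξ₀ : ℂ) + 2) * a + I * b) := by
    linear_combination (4 * a - 4 * b * ((ξ₀ : ℂ) - I)) * I_sq
  rw [e3]
  ring
end

section
/- Let V be a finite-dimensional real vector space of dimension n and let Q be a quadratic form on V, with Clifford algebra Cl(Q) and canonical linear embedding ι : V → Cl(Q). For all u, v ∈ V, the trace of the ℝ-linear endomorphism x ↦ ι(u)·ι(v)·x of Cl(Q) (left multiplication by ι(u)·ι(v)) equals (2^n / 2)·polar_Q(u,v), where polar_Q(u,v) = Q(u+v) − Q(u) − Q(v). -/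
theorem stmt17 (V : Type*) [AddCommGroup V] [Module ℝ V] [FiniteDimensional ℝ V]
    (n : ℕ) (hn : Module.finrank ℝ V = n) (Q : QuadraticForm ℝ V) (u v : V) :
    LinearMap.trace ℝ (CliffordAlgebra Q)
        (LinearMap.mulLeft ℝ (CliffordAlgebra.ι Q u * CliffordAlgebra.ι Q v)) =
      (2 ^ n / 2 : ℝ) * QuadraticMap.polar Q u v := by
  have : Invertible (2 : ℝ) := invertibleOfNonzero two_ne_zero
  let b := ((Module.finBasisOfFinrankEq ℝ V hn).ExteriorAlgebra).map
    (CliffordAlgebra.equivExterior Q).symm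
  have : Module.Finite ℝ (CliffordAlgebra Q) := Module.Finite.of_basis b
  have hf : Module.finrank ℝ (CliffordAlgebra Q) = 2 ^ n := by
    rw [Module.finrank_eq_card_basis b]; simp
  set a := CliffordAlgebra.ι Q u with ha
  set c := CliffordAlgebra.ι Q v with hc
  have h1 : LinearMap.trace ℝ _ (LinearMap.mulLeft ℝ (a * c)) =
      LinearMap.trace ℝ _ (LinearMap.mulLeft ℝ (c * a)) := by
    rw [LinearMap.mulLeft_mul, LinearMap.mulLeft_mul]
    exact LinearMap.trace_mul_comm ℝ _ _
  have h2 : LinearMap.mulLeft ℝ (a * c) + LinearMap.mulLeft ℝ (c * a) =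
      QuadraticMap.polar Q u v • (1 : CliffordAlgebra Q →ₗ[ℝ] CliffordAlgebra Q) := by
    ext x
    have := CliffordAlgebra.ι_mul_ι_add_swap (Q := Q) u v
    simp only [LinearMap.add_apply, LinearMap.mulLeft_apply, ← add_mul, LinearMap.smul_apply,
      Module.End.one_apply, ha, hc, this]
    rw [Algebra.smul_def]
  have h3 := congrArg (LinearMap.trace ℝ _) h2
  rw [map_add, ← h1, map_smul, LinearMap.trace_one, hf, smul_eq_mul] at h3
  push_cast at h3
  linarith
end

section
/- Let V be a finite-dimensional real vector space and let Q be a quadratic form on V, with Clifford algebra Cl(Q) and canonical linear embedding ι : V → Cl(Q). Let u, v, w, x ∈ V be such that polar_Q vanishes on every pair among them, i.e. polar_Q(u,v) = polar_Q(u,w) = polar_Q(u,x) = polar_Q(v,w) = polar_Q(v,x) = polar_Q(w,x) = 0, where polar_Q(a,b) = Q(a+b) − Q(a) − Q(b). Then the trace of the ℝ-linear endomorphism y ↦ ι(u)·ι(v)·ι(w)·ι(x)·y of Cl(Q) (left multiplication by ι(u)·ι(v)·ι(w)·ι(x)) equals 0. -/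
theorem stmt19 (V : Type*) [AddCommGroup V] [Module ℝ V] [FiniteDimensional ℝ V]
    (Q : QuadraticForm ℝ V) (u v w x : V)
    (huv : QuadraticMap.polar Q u v = 0) (huw : QuadraticMap.polar Q u w = 0)
    (hux : QuadraticMap.polar Q u x = 0) (hvw : QuadraticMap.polar Q v w = 0)
    (hvx : QuadraticMap.polar Q v x = 0) (hwx : QuadraticMap.polar Q w x = 0) :
    LinearMap.trace ℝ (CliffordAlgebra Q)
        (LinearMap.mulLeft ℝ
          (CliffordAlgebra.ι Q u * CliffordAlgebra.ι Q v * CliffordAlgebra.ι Q w *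
            CliffordAlgebra.ι Q x)) = 0 := by
  have anti : ∀ a b : V, QuadraticMap.polar Q a b = 0 →
      CliffordAlgebra.ι Q b * CliffordAlgebra.ι Q a =
        -(CliffordAlgebra.ι Q a * CliffordAlgebra.ι Q b) := by
    intro a b h
    have h1 := CliffordAlgebra.ι_mul_ι_add_swap (Q := Q) a b
    rw [h, map_zero] at h1
    exact eq_neg_of_add_eq_zero_right h1
  have h1 := anti u v huv
  have h2 := anti u w huw
  have h3 := anti u x hux
  generalize CliffordAlgebra.ι Q u = a at *
  generalize CliffordAlgebra.ι Q v = b at *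
  generalize CliffordAlgebra.ι Q w = c at *
  generalize CliffordAlgebra.ι Q x = d at *
  have key : b * c * d * a = -(a * b * c * d) := by
    calc b * c * d * a = b * c * (d * a) := by rw [mul_assoc]
      _ = -(b * (c * a) * d) := by rw [h3]; simp only [mul_neg, mul_assoc]
      _ = (b * a) * c * d := by rw [h2]; simp only [mul_neg, neg_mul, neg_neg, mul_assoc]
      _ = -(a * b * c * d) := by rw [h1]; simp only [neg_mul]
  have cyc : LinearMap.trace ℝ (CliffordAlgebra Q) (LinearMap.mulLeft ℝ (a * (b * c * d))) =
      LinearMap.trace ℝ (CliffordAlgebra Q) (LinearMap.mulLeft ℝ (b * c * d * a)) := by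
    rw [LinearMap.mulLeft_mul ℝ _ a (b * c * d), LinearMap.mulLeft_mul ℝ _ (b * c * d) a]
    exact LinearMap.trace_mul_comm ℝ _ _
  have hneg : LinearMap.mulLeft ℝ (-(a * b * c * d)) = -LinearMap.mulLeft ℝ (a * b * c * d) := by
    ext y; simp [mul_assoc]
  have e : a * (b * c * d) = a * b * c * d := by simp only [mul_assoc]
  rw [key, hneg, map_neg, e] at cyc
  linarith
end
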